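/- arXiv:2103.07650 — 2 statements merged into one kernel-verified Lean document; each statement's English description precedes it below -/
import Mathlib

section
/- Suppose the real coefficients {A^{αβ} : α, β = 0,1,2,3} satisfy the null condition. Then there exists a constant C > 0, depending only on the coefficients, such that for all C^∞ functions v, w on [0,∞) × ℝ³ and all (t, x) ∈ [0,∞) × ℝ³: |A^{αβ}(∂_α v)(∂_β w)(t,x)| ≤ C (1+t)^{−1} Σ_{|a|=1} ( |Γ^a v(t,x)| |∂w(t,x)| + |∂v(t,x)| |Γ^a w(t,x)| ), where the sum is over all single applications of the Klainerman vector fields and summation over repeated indices α, β ∈ {0,1,2,3} is understood. -/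
/-!
The null condition forces the symmetric part of `A` to be a multiple of the Minkowski metric, as one
sees by testing it on the null covectors `(1, ±e_j)` and `(5, 3e_j + 4e_k)`. Hence `QF A v w` is a
linear combination of the basic null forms `Q₀ = ∂ₜv ∂ₜw - ∇v·∇w` and
`Q_{αβ} = ∂_α v ∂_β w - ∂_β v ∂_α w` (`null_form_decomp`).

Each basic null form is trivially bounded by products `|∂v| |∂w|`, and gains a factor `t` through the
identities
* `t Q₀ = S v ∂ₜw - ∑ ∂_j v L_j w`,
* `t Q_{0j} = ∂ₜv L_j w - L_j v ∂ₜw`,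
* `t Q_{jk} = L_j v ∂_k w - L_k v ∂_j w - ∂ₜv Ω_{jk} w`.

Adding the two bounds gives the weight `1 + t`. Everything is pointwise algebra in the first
derivatives of `v` and `w`.
-/

open MeasureTheory Real ENNReal FourierTransform
open scoped ContDiff

noncomputable section

/-- Euclidean space ℝⁿ. -/
abbrev Spc (n : ℕ) := EuclideanSpace ℝ (Fin n)

/-- Space-time ℝ × ℝⁿ. -/
abbrev STn (n : ℕ) := ℝ × Spc n

variable {n : ℕ}

/-- Directional derivative in the space-time direction `v`. -/
def dirD (v : STn n) (f : STn n → ℝ) : STn n → ℝ := fun p => fderiv ℝ f p v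

/-- Time derivative ∂_t. -/
def dtD : (STn n → ℝ) → STn n → ℝ := dirD (1, 0)

/-- Spatial derivative ∂_j. -/
def dxD (j : Fin n) : (STn n → ℝ) → STn n → ℝ := dirD (0, EuclideanSpace.single j 1)

/-- Spatial Laplacian. -/
def lapD (f : STn n → ℝ) : STn n → ℝ := fun p => ∑ j, dxD j (dxD j f) p

/-- d'Alembertian □ = ∂_t² − Δ. -/
def boxD (f : STn n → ℝ) : STn n → ℝ := fun p => dtD (dtD f) p - lapD f p

/-- Lorentz boost L_j = t ∂_j + x_j ∂_t. -/
def LD (j : Fin n) (f : STn n → ℝ) : STn n → ℝ := fun p => p.1 * dxD j f p + p.2 j * dtD f p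

/-- Rotation Ω_{jk} = x_j ∂_k − x_k ∂_j. -/
def RotD (j k : Fin n) (f : STn n → ℝ) : STn n → ℝ := fun p => p.2 j * dxD k f p - p.2 k * dxD j f p

/-- Scaling S = t ∂_t + x·∇. -/
def SD (f : STn n → ℝ) : STn n → ℝ := fun p => p.1 * dtD f p + ∑ j, p.2 j * dxD j f p

/-- Index type for the Klainerman vector fields. -/
def GIdx (n : ℕ) := Option (Fin n) ⊕ Fin n ⊕ (Fin n × Fin n) ⊕ Unit

instance : Fintype (GIdx n) := by unfold GIdx; infer_instance
instance : DecidableEq (GIdx n) := by unfold GIdx; infer_instance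

/-- The Klainerman vector field with index `i`. -/
def Gop : GIdx n → (STn n → ℝ) → STn n → ℝ
  | Sum.inl none => dtD
  | Sum.inl (some j) => dxD j
  | Sum.inr (Sum.inl j) => LD j
  | Sum.inr (Sum.inr (Sum.inl jk)) => RotD jk.1 jk.2
  | Sum.inr (Sum.inr (Sum.inr _)) => SD

/-- Iterated composition Γ^α along a word of indices. -/
def GwL : List (GIdx n) → (STn n → ℝ) → STn n → ℝ
  | [], f => f
  | a :: l, f => Gop a (GwL l f)

/-- Sum of a quantity over all products of at most `N` Klainerman vector fields. -/
def SumW (N : ℕ) (Φ : (STn n → ℝ) → ℝ≥0∞) (f : STn n → ℝ) : ℝ≥0∞ :=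
  ∑ m ∈ Finset.range (N + 1), ∑ w : Fin m → GIdx n, Φ (GwL (List.ofFn w) f)

/-- Pointwise norm of the full space-time gradient ∂u = (∂_t u, ∇_x u). -/
def gradN (f : STn n → ℝ) (p : STn n) : ℝ := Real.sqrt ((dtD f p) ^ 2 + ∑ j, (dxD j f p) ^ 2)

/-- Fourier transform (in space) of a real valued function. -/
def fourierS (g : Spc n → ℝ) : Spc n → ℂ := 𝓕 (fun x => (g x : ℂ))

/-- ‖ |D|^s g ‖_{L²}, i.e. the L² norm of ξ ↦ |ξ|^s (ℱ g)(ξ). -/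
def DsN (s : ℝ) (g : Spc n → ℝ) : ℝ≥0∞ :=
  eLpNorm (fun ξ : Spc n => ‖ξ‖ ^ s * ‖fourierS g ξ‖) 2 volume

/-- The surface measure on the unit sphere of ℝⁿ. -/
def sphM (n : ℕ) : Measure (Metric.sphere (0 : Spc n) 1) := (volume : Measure (Spc n)).toSphere

/-- The L^q norm of g(r ω) over the unit sphere. -/
def sphN (n : ℕ) (q : ℝ) (g : Spc n → ℝ) (r : ℝ) : ℝ≥0∞ :=
  (∫⁻ o, (‖g (r • (o : Spc n))‖₊ : ℝ≥0∞) ^ q ∂(sphM n)) ^ (1 / q)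

/-- The mixed norm ‖g‖_{p,q} = (∫_0^∞ ‖g(r·)‖_{L^q(S^{n-1})}^p r^{n-1} dr)^{1/p}. -/
def mixN (n : ℕ) (p q : ℝ) (g : Spc n → ℝ) : ℝ≥0∞ :=
  (∫⁻ r in Set.Ioi (0 : ℝ), (sphN n q g r) ^ p * ENNReal.ofReal (r ^ (n - 1))) ^ (1 / p)

/-- A space-time function which is Schwartz in the space variable for each fixed time. -/
def SchwartzInX (v : STn n → ℝ) : Prop :=
  ∀ t : ℝ, ∃ φ : SchwartzMap (Spc n) ℝ, ∀ x, v (t, x) = φ x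

/-- The space-time partial derivatives ∂_0 = ∂_t, ∂_j (j = 1,2,3) on ℝ × ℝ³. -/
def pd4 (α : Fin 4) : (STn 3 → ℝ) → STn 3 → ℝ := Fin.cases dtD (fun j => dxD j) α

/-- The null condition for a set of coefficients {A^{αβ}}. -/
def NullCond (A : Fin 4 → Fin 4 → ℝ) : Prop :=
  ∀ X : Fin 4 → ℝ, (X 0) ^ 2 = (X 1) ^ 2 + (X 2) ^ 2 + (X 3) ^ 2 →
    ∑ α, ∑ β, A α β * X α * X β = 0

/-- The null form A^{αβ} (∂_α v)(∂_β w). -/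
def QF (A : Fin 4 → Fin 4 → ℝ) (v w : STn 3 → ℝ) (p : STn 3) : ℝ :=
  ∑ α, ∑ β, A α β * pd4 α v p * pd4 β w p

/-- The good derivative T_j = ∂_j + (x_j/|x|) ∂_t. -/
def TD (j : Fin 3) (f : STn 3 → ℝ) (p : STn 3) : ℝ := dxD j f p + (p.2 j / ‖p.2‖) * dtD f p

end

/-- The algebraic form of the null condition: the symmetric part of `A` is `A 0 0` times the
Minkowski metric `diag(1, -1, -1, -1)`. -/
lemma NullCond.symm_part {A : Fin 4 → Fin 4 → ℝ} (hA : NullCond A) :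
    (A 1 1 = -A 0 0 ∧ A 2 2 = -A 0 0 ∧ A 3 3 = -A 0 0) ∧
    (A 1 0 = -A 0 1 ∧ A 2 0 = -A 0 2 ∧ A 3 0 = -A 0 3) ∧
    (A 2 1 = -A 1 2 ∧ A 3 1 = -A 1 3 ∧ A 3 2 = -A 2 3) := by
  have p1 := hA ![1, 1, 0, 0] (by simp)
  have m1 := hA ![1, -1, 0, 0] (by simp)
  have p2 := hA ![1, 0, 1, 0] (by simp)
  have m2 := hA ![1, 0, -1, 0] (by simp)
  have p3 := hA ![1, 0, 0, 1] (by simp)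
  have m3 := hA ![1, 0, 0, -1] (by simp)
  have q12 := hA ![5, 3, 4, 0] (by simp; norm_num)
  have q13 := hA ![5, 3, 0, 4] (by simp; norm_num)
  have q23 := hA ![5, 0, 3, 4] (by simp; norm_num)
  simp [Fin.sum_univ_four] at p1 m1 p2 m2 p3 m3 q12 q13 q23
  refine ⟨⟨?_, ?_, ?_⟩, ⟨?_, ?_, ?_⟩, ⟨?_, ?_, ?_⟩⟩ <;> linarith

/-- A bilinear form satisfying the null condition is a combination of the basic null forms. -/
lemma null_form_decomp {A : Fin 4 → Fin 4 → ℝ} (hA : NullCond A) (a b : Fin 4 → ℝ) :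
    ∑ α, ∑ β, A α β * a α * b β =
      A 0 0 * (a 0 * b 0 - a 1 * b 1 - a 2 * b 2 - a 3 * b 3) +
      A 0 1 * (a 0 * b 1 - a 1 * b 0) + A 0 2 * (a 0 * b 2 - a 2 * b 0) +
      A 0 3 * (a 0 * b 3 - a 3 * b 0) + A 1 2 * (a 1 * b 2 - a 2 * b 1) +
      A 1 3 * (a 1 * b 3 - a 3 * b 1) + A 2 3 * (a 2 * b 3 - a 3 * b 2) := by
  obtain ⟨⟨h1, h2, h3⟩, ⟨h4, h5, h6⟩, ⟨h7, h8, h9⟩⟩ := hA.symm_part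
  simp only [Fin.sum_univ_four, h1, h2, h3, h4, h5, h6, h7, h8, h9]
  ring

lemma gradN_nonneg (f : STn 3 → ℝ) (z : STn 3) : 0 ≤ gradN f z := Real.sqrt_nonneg _

lemma abs_dtD_le_gradN (f : STn 3 → ℝ) (z : STn 3) : |dtD f z| ≤ gradN f z :=
  Real.abs_le_sqrt (le_add_of_nonneg_right (Finset.sum_nonneg fun _ _ => sq_nonneg _))

lemma abs_dxD_le_gradN (j : Fin 3) (f : STn 3 → ℝ) (z : STn 3) : |dxD j f z| ≤ gradN f z := by
  refine Real.abs_le_sqrt ?_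
  have h := Finset.single_le_sum (f := fun j => (dxD j f z) ^ 2)
    (fun _ _ => sq_nonneg _) (Finset.mem_univ j)
  have h0 := sq_nonneg (dtD f z)
  linarith

/-- The sum over the Klainerman fields on the right-hand side of the estimate. -/
noncomputable def gammaSum (v w : STn 3 → ℝ) (z : STn 3) : ℝ :=
  ∑ l : GIdx 3, (|Gop l v z| * gradN w z + gradN v z * |Gop l w z|)

lemma Gop_le_gammaSum (v w : STn 3 → ℝ) (z : STn 3) (l : GIdx 3) :
    |Gop l v z| * gradN w z + gradN v z * |Gop l w z| ≤ gammaSum v w z := by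
  refine Finset.single_le_sum
    (f := fun l : GIdx 3 => |Gop l v z| * gradN w z + gradN v z * |Gop l w z|)
    (fun i _ => ?_) (Finset.mem_univ l)
  have := gradN_nonneg v z
  have := gradN_nonneg w z
  positivity

lemma abs_Gop_mul_le (v w : STn 3 → ℝ) (z : STn 3) (l : GIdx 3) {b : ℝ} (hb : |b| ≤ gradN w z) :
    |Gop l v z * b| ≤ gammaSum v w z := by
  have h1 := mul_le_mul_of_nonneg_left hb (abs_nonneg (Gop l v z))
  have h2 := mul_nonneg (gradN_nonneg v z) (abs_nonneg (Gop l w z))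
  have h3 := Gop_le_gammaSum v w z l
  rw [abs_mul]
  linarith

lemma abs_mul_Gop_le (v w : STn 3 → ℝ) (z : STn 3) (l : GIdx 3) {a : ℝ} (ha : |a| ≤ gradN v z) :
    |a * Gop l w z| ≤ gammaSum v w z := by
  have h1 := mul_le_mul_of_nonneg_right ha (abs_nonneg (Gop l w z))
  have h2 := mul_nonneg (abs_nonneg (Gop l v z)) (gradN_nonneg w z)
  have h3 := Gop_le_gammaSum v w z l
  rw [abs_mul]
  linarith

/-- The metric null form `Q₀`; the constant counts the four terms of `Q₀` and the four of `t Q₀`. -/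
lemma metric_form_bound (v w : STn 3 → ℝ) (z : STn 3) (hz : 0 ≤ z.1) :
    (1 + z.1) * |dtD v z * dtD w z - dxD 0 v z * dxD 0 w z - dxD 1 v z * dxD 1 w z
      - dxD 2 v z * dxD 2 w z| ≤ 8 * gammaSum v w z := by
  have e0 := abs_le.1 (abs_Gop_mul_le v w z (Sum.inl none) (abs_dtD_le_gradN w z))
  have e (j : Fin 3) := abs_le.1 (abs_Gop_mul_le v w z (Sum.inl (some j)) (abs_dxD_le_gradN j w z))
  have s := abs_le.1
    (abs_Gop_mul_le v w z (Sum.inr (Sum.inr (Sum.inr ()))) (abs_dtD_le_gradN w z))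
  have m (j : Fin 3) := abs_le.1
    (abs_mul_Gop_le v w z (Sum.inr (Sum.inl j)) (abs_dxD_le_gradN j v z))
  have e1 := e 0; have e2 := e 1; have e3 := e 2
  have m1 := m 0; have m2 := m 1; have m3 := m 2
  simp only [Gop, LD, SD, Fin.sum_univ_three] at e0 e1 e2 e3 s m1 m2 m3
  rw [← abs_of_nonneg (by linarith : 0 ≤ 1 + z.1), ← abs_mul, abs_le]
  constructor <;> linarith

lemma time_form_bound (v w : STn 3 → ℝ) (z : STn 3) (hz : 0 ≤ z.1) (j : Fin 3) :
    (1 + z.1) * |dtD v z * dxD j w z - dxD j v z * dtD w z| ≤ 8 * gammaSum v w z := by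
  have e1 := abs_le.1 (abs_Gop_mul_le v w z (Sum.inl none) (abs_dxD_le_gradN j w z))
  have e2 := abs_le.1 (abs_Gop_mul_le v w z (Sum.inl (some j)) (abs_dtD_le_gradN w z))
  have m1 := abs_le.1 (abs_mul_Gop_le v w z (Sum.inr (Sum.inl j)) (abs_dtD_le_gradN v z))
  have m2 := abs_le.1 (abs_Gop_mul_le v w z (Sum.inr (Sum.inl j)) (abs_dtD_le_gradN w z))
  simp only [Gop, LD] at e1 e2 m1 m2
  rw [← abs_of_nonneg (by linarith : 0 ≤ 1 + z.1), ← abs_mul, abs_le]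
  constructor <;> linarith

lemma space_form_bound (v w : STn 3 → ℝ) (z : STn 3) (hz : 0 ≤ z.1) (j k : Fin 3) :
    (1 + z.1) * |dxD j v z * dxD k w z - dxD k v z * dxD j w z| ≤ 8 * gammaSum v w z := by
  have e1 := abs_le.1 (abs_Gop_mul_le v w z (Sum.inl (some j)) (abs_dxD_le_gradN k w z))
  have e2 := abs_le.1 (abs_Gop_mul_le v w z (Sum.inl (some k)) (abs_dxD_le_gradN j w z))
  have m1 := abs_le.1 (abs_Gop_mul_le v w z (Sum.inr (Sum.inl j)) (abs_dxD_le_gradN k w z))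
  have m2 := abs_le.1 (abs_Gop_mul_le v w z (Sum.inr (Sum.inl k)) (abs_dxD_le_gradN j w z))
  have m3 := abs_le.1
    (abs_mul_Gop_le v w z (Sum.inr (Sum.inr (Sum.inl (j, k)))) (abs_dtD_le_gradN v z))
  simp only [Gop, LD, RotD] at e1 e2 m1 m2 m3
  rw [← abs_of_nonneg (by linarith : 0 ≤ 1 + z.1), ← abs_mul, abs_le]
  constructor <;> linarith

/-- Decay estimate for null forms (Lemma 5.4). -/
theorem null_form_decay (A : Fin 4 → Fin 4 → ℝ) (hA : NullCond A) :
    ∃ C > (0 : ℝ), ∀ v w : STn 3 → ℝ, ContDiff ℝ ∞ v → ContDiff ℝ ∞ w →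
      ∀ z : STn 3, 0 ≤ z.1 →
        |QF A v w z| ≤ C * (1 + z.1)⁻¹ *
          ∑ l : GIdx 3, (|Gop l v z| * gradN w z + gradN v z * |Gop l w z|) := by
  -- `K` bounds the coefficients of the decomposition into basic null forms; the `+ 1` keeps `C > 0`.
  set K : ℝ := |A 0 0| + |A 0 1| + |A 0 2| + |A 0 3| + |A 1 2| + |A 1 3| + |A 2 3| with hK
  refine ⟨8 * K + 1, by positivity, fun v w _ _ z hz => ?_⟩
  change |QF A v w z| ≤ (8 * K + 1) * (1 + z.1)⁻¹ * gammaSum v w z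
  have hpos : 0 < 1 + z.1 := by linarith
  have hG : 0 ≤ gammaSum v w z := by
    have h := metric_form_bound v w z hz
    have h' := mul_nonneg hpos.le (abs_nonneg (dtD v z * dtD w z - dxD 0 v z * dxD 0 w z
      - dxD 1 v z * dxD 1 w z - dxD 2 v z * dxD 2 w z))
    linarith
  have hQ : QF A v w z =
      A 0 0 * (dtD v z * dtD w z - dxD 0 v z * dxD 0 w z - dxD 1 v z * dxD 1 w z
        - dxD 2 v z * dxD 2 w z) +
      A 0 1 * (dtD v z * dxD 0 w z - dxD 0 v z * dtD w z) +
      A 0 2 * (dtD v z * dxD 1 w z - dxD 1 v z * dtD w z) +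
      A 0 3 * (dtD v z * dxD 2 w z - dxD 2 v z * dtD w z) +
      A 1 2 * (dxD 0 v z * dxD 1 w z - dxD 1 v z * dxD 0 w z) +
      A 1 3 * (dxD 0 v z * dxD 2 w z - dxD 2 v z * dxD 0 w z) +
      A 2 3 * (dxD 1 v z * dxD 2 w z - dxD 2 v z * dxD 1 w z) :=
    null_form_decomp hA (fun α => pd4 α v z) (fun α => pd4 α w z)
  have key (c q : ℝ) (h : (1 + z.1) * |q| ≤ 8 * gammaSum v w z) :
      |(1 + z.1) * (c * q)| ≤ |c| * (8 * gammaSum v w z) := by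
    rw [abs_mul, abs_mul, abs_of_pos hpos, mul_left_comm]
    exact mul_le_mul_of_nonneg_left h (abs_nonneg c)
  have k0 := abs_le.1 (key (A 0 0) _ (metric_form_bound v w z hz))
  have k1 := abs_le.1 (key (A 0 1) _ (time_form_bound v w z hz 0))
  have k2 := abs_le.1 (key (A 0 2) _ (time_form_bound v w z hz 1))
  have k3 := abs_le.1 (key (A 0 3) _ (time_form_bound v w z hz 2))
  have k4 := abs_le.1 (key (A 1 2) _ (space_form_bound v w z hz 0 1))
  have k5 := abs_le.1 (key (A 1 3) _ (space_form_bound v w z hz 0 2))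
  have k6 := abs_le.1 (key (A 2 3) _ (space_form_bound v w z hz 1 2))
  have main : |(1 + z.1) * QF A v w z| ≤ (8 * K + 1) * gammaSum v w z := by
    rw [hQ, hK, abs_le]
    constructor <;> linarith
  rw [abs_mul, abs_of_pos hpos] at main
  rw [mul_right_comm, ← div_eq_mul_inv, le_div_iff₀ hpos]
  linarith
end

section
/- For any η > 0 there exists a constant C = C_η > 0 such that for every T > 0, every C^∞ function F on [0,T] × ℝ³, and every C^∞ function u on [0,T] × ℝ³ with compact support in x for each t, satisfying ∂_t²u − Δu = F pointwise: sup_{0<t<T} ‖∂u(t,·)‖_{L²(ℝ³)} + Σ_{j=1}^3 ‖(1+|t−|x||)^{−1/2−η} T_j u‖_{L²((0,T)×ℝ³)} ≤ C ( ‖∂u(0,·)‖_{L²(ℝ³)} + ∫_0^T ‖F(τ,·)‖_{L²(ℝ³)} dτ ), with C independent of T, u, and F. -/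
/-! The estimate is the energy identity for the multiplier `w ∂ₜu` with a weight
`w = A(t - |x|) B(t + |x|)`. Here `A` (`ghostA`) is bounded between `1` and a constant `K` and
`A'(s) = -(1 + |s|) ^ (-1 - 2η)`, which is integrable because `η > 0`; `B` (`cutB`) is a smooth
nonincreasing cutoff. The derivatives of the weight contribute
`A' B (|∂u|²/2 + ∂ₜu ∂ᵣu) + A B' (|∂u|²/2 - ∂ₜu ∂ᵣu)`. Both brackets are nonnegative and the first
one is `∑ (T_j u)² / 2`, so the first term gives the weighted space-time norm of `T_j u` and the
second one has a favourable sign and is dropped (`multiplier_ineq`, `energy_ineq`).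

The cutoff confines everything to a backward light cone. This matters because the slices of `u` are
compactly supported only for each fixed time, with no uniformity in `t`. Since `|x|` is not
differentiable at the origin, it is replaced by `ρ = √(ε² + |x|²)`; the signs survive because
`|∇ρ| ≤ 1`.

Cauchy–Schwarz in `x` for the source term (`source_le`) and absorption of the supremum in time of
the weighted energy give bounds independent of `ε` and of the cutoff (`localized_bound`), and
Fatou's lemma along `ε = 1 / (k + 1)`, cutoff radius `k → ∞`, yields the claim
(`energy_bound`, `ghost_bound`). -/

open MeasureTheory Real ENNReal FourierTransform
open scoped ContDiff

section GhostWeight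

/-! ### Functions supported in a backward light cone -/

/-- `h` vanishes outside the backward solid light cone `|x| ≤ R - t`. -/
def InCone (R : ℝ) (h : STn 3 → ℝ) : Prop := ∀ p : STn 3, R < p.1 + ‖p.2‖ → h p = 0

lemma InCone.mul_right {R : ℝ} {h : STn 3 → ℝ} (hh : InCone R h) (g : STn 3 → ℝ) :
    InCone R (fun p => h p * g p) := fun p hp => by simp [hh p hp]

lemma InCone.dirD {R : ℝ} {h : STn 3 → ℝ} (hh : InCone R h) (v : STn 3) :
    InCone R (dirD v h) := by
  intro p hp
  have ho : IsOpen {q : STn 3 | R < q.1 + ‖q.2‖} := by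
    apply isOpen_lt <;> fun_prop
  have he : h =ᶠ[nhds p] fun _ => 0 := by
    filter_upwards [ho.mem_nhds hp] with q hq using hh q hq
  simp [_root_.dirD, he.fderiv_eq]

lemma InCone.hasCompactSupport {R : ℝ} {h : STn 3 → ℝ} (hh : InCone R h) (s : ℝ) :
    HasCompactSupport (fun x => h (s, x)) := by
  apply HasCompactSupport.intro (isCompact_closedBall (0 : Spc 3) (R - s))
  intro x hx
  apply hh
  simp only [Metric.mem_closedBall, dist_zero_right, not_le] at hx
  show R < s + ‖x‖
  linarith

lemma InCone.integrable_slice {R : ℝ} {h : STn 3 → ℝ} (hh : InCone R h) (hc : Continuous h)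
    (s : ℝ) : Integrable (fun x => h (s, x)) :=
  Continuous.integrable_of_hasCompactSupport (by fun_prop) (hh.hasCompactSupport s)

lemma InCone.integrableOn {R : ℝ} {h : STn 3 → ℝ} (hh : InCone R h) (hc : Continuous h)
    (t : ℝ) : IntegrableOn h (Set.Ioc 0 t ×ˢ (Set.univ : Set (Spc 3))) := by
  have h1 : IntegrableOn h (Set.Icc 0 t ×ˢ Metric.closedBall (0 : Spc 3) R) :=
    hc.continuousOn.integrableOn_compact
      (isCompact_Icc.prod (isCompact_closedBall (0 : Spc 3) R))
  refine h1.of_forall_sdiff_eq_zero (measurableSet_Ioc.prod MeasurableSet.univ) ?_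
  rintro ⟨s, x⟩ ⟨⟨hs, -⟩, hx⟩
  apply hh
  have hs' : s ∈ Set.Ioc 0 t := hs
  by_contra hcon
  exact hx ⟨⟨hs'.1.le, hs'.2⟩, by
    simp only [Metric.mem_closedBall, dist_zero_right]; simp only at hcon; linarith [hs'.1]⟩

lemma continuous_dirD {h : STn 3 → ℝ} (hc : ContDiff ℝ 1 h) (v : STn 3) :
    Continuous (dirD v h) := by
  have := hc.continuous_fderiv (by simp)
  unfold dirD
  fun_prop

/-- The fundamental theorem of calculus in `t`, integrated over space. -/
lemma integral_dtD {R : ℝ} {h : STn 3 → ℝ} (hh : InCone R h) (hc : ContDiff ℝ 1 h)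
    {t : ℝ} (ht : 0 ≤ t) :
    ∫ z in Set.Ioc 0 t ×ˢ (Set.univ : Set (Spc 3)), dtD h z =
      (∫ x, h (t, x)) - ∫ x, h (0, x) := by
  have hcd : Continuous (dtD h) := continuous_dirD hc _
  have hi := (hh.dirD (1, 0)).integrableOn hcd t
  rw [Measure.volume_eq_prod, IntegrableOn, ← Measure.prod_restrict, Measure.restrict_univ] at hi
  rw [Measure.volume_eq_prod, ← Measure.prod_restrict, Measure.restrict_univ]
  change ∫ z, dirD (1, 0) h z ∂_ = _
  rw [integral_prod_symm _ hi, ← integral_sub (hh.integrable_slice hc.continuous _)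
    (hh.integrable_slice hc.continuous _)]
  congr 1
  ext x
  rw [← intervalIntegral.integral_of_le ht]
  apply intervalIntegral.integral_eq_sub_of_hasDerivAt (f := fun s => h (s, x))
  · intro s _
    have h1 : HasFDerivAt h (fderiv ℝ h (s, x)) (s, x) :=
      (hc.differentiable (by simp) _).hasFDerivAt
    have h2 : HasDerivAt (fun s : ℝ => (s, x)) ((1 : ℝ), (0 : Spc 3)) s :=
      (hasDerivAt_id s).prodMk (hasDerivAt_const s x)
    exact h1.comp_hasDerivAt s h2
  · apply Continuous.intervalIntegrable
    exact (continuous_dirD hc _).comp (by fun_prop)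

lemma integral_dxD {R : ℝ} {h : STn 3 → ℝ} (hh : InCone R h) (hc : ContDiff ℝ 1 h)
    (j : Fin 3) (t : ℝ) :
    ∫ z in Set.Ioc 0 t ×ˢ (Set.univ : Set (Spc 3)), dxD j h z = 0 := by
  set v : Spc 3 := EuclideanSpace.single j 1
  have hcd : Continuous (dxD j h) := continuous_dirD hc _
  have hi : IntegrableOn (dxD j h) (Set.Ioc 0 t ×ˢ (Set.univ : Set (Spc 3))) :=
    (hh.dirD (0, v)).integrableOn hcd t
  rw [Measure.volume_eq_prod, setIntegral_prod _ hi]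
  apply integral_eq_zero_of_ae
  filter_upwards with s
  rw [Measure.restrict_univ]
  have hd : Differentiable ℝ (fun x => h (s, x)) :=
    (hc.differentiable (by simp)).comp (by fun_prop)
  have hf : ∀ x, fderiv ℝ (fun x => h (s, x)) x v = dxD j h (s, x) := by
    intro x
    have h1 : HasFDerivAt h (fderiv ℝ h (s, x)) (s, x) :=
      (hc.differentiable (by simp) _).hasFDerivAt
    have h2 := h1.comp x (hasFDerivAt_prodMk_right s x)
    have h3 := h2.fderiv
    change fderiv ℝ (fun x => h (s, x)) x = _ at h3
    rw [h3]
    simp [dxD, dirD, v]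
  have hs : Integrable (fun x => dxD j h (s, x)) := (hh.dirD _).integrable_slice hcd s
  have := integral_mul_fderiv_eq_neg_fderiv_mul_of_integrable (μ := volume) (𝕜 := ℝ)
    (f := fun _ : Spc 3 => (1 : ℝ)) (g := fun x => h (s, x)) (v := v)
    (by simp) (by simpa [hf] using hs)
    (by simpa using hh.integrable_slice hc.continuous s)
    (fun _ _ => by fun_prop) (fun _ _ => hd _)
  simpa [hf] using this

/-! ### The weights -/

/-- The derivative of the ghost weight, up to sign. -/
noncomputable def ghostDensity (η s : ℝ) : ℝ := (1 + |s|) ^ (-(1 + 2 * η))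

/-- The total mass of `ghostDensity`. -/
noncomputable def ghostMass (η : ℝ) : ℝ := ∫ s, ghostDensity η s

/-- The ghost weight: a function of `t - |x|` with values in `[1, 1 + 2 * ghostMass η]` and
derivative `-ghostDensity η`. -/
noncomputable def ghostA (η s : ℝ) : ℝ := 1 + ghostMass η - ∫ σ in (0 : ℝ)..s, ghostDensity η σ

/-- A smooth nonincreasing cutoff, to be evaluated at `t + |x|`: it is `1` up to `N` and
vanishes from `N + 1` on. -/
noncomputable def cutB (N s : ℝ) : ℝ := Real.smoothTransition (N + 1 - s)

/-- A smooth regularization of `|x|`. -/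
noncomputable def rhoE (ε : ℝ) (x : Spc 3) : ℝ := √(ε ^ 2 + ‖x‖ ^ 2)

/-- The space-time weight of the energy estimate. -/
noncomputable def wgt (η ε N : ℝ) (p : STn 3) : ℝ :=
  ghostA η (p.1 - rhoE ε p.2) * cutB N (p.1 + rhoE ε p.2)

lemma ghostDensity_nonneg (η s : ℝ) : 0 ≤ ghostDensity η s := by
  unfold ghostDensity; positivity

lemma continuous_ghostDensity (η : ℝ) : Continuous (ghostDensity η) := by
  unfold ghostDensity
  refine Continuous.rpow_const (by fun_prop) fun s => Or.inl ?_
  positivity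

lemma integrable_ghostDensity {η : ℝ} (hη : 0 < η) : Integrable (ghostDensity η) := by
  have := integrable_one_add_norm (E := ℝ) (μ := volume) (r := 1 + 2 * η) (by simp; linarith)
  simp only [Real.norm_eq_abs] at this
  exact this

lemma ghostMass_nonneg (η : ℝ) : 0 ≤ ghostMass η :=
  integral_nonneg fun s => ghostDensity_nonneg η s

lemma abs_integral_ghostDensity_le {η : ℝ} (hη : 0 < η) (s : ℝ) :
    |∫ σ in (0 : ℝ)..s, ghostDensity η σ| ≤ ghostMass η := by
  have h1 := intervalIntegral.norm_integral_le_integral_norm_uIoc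
    (f := ghostDensity η) (a := 0) (b := s) (μ := volume)
  rw [Real.norm_eq_abs] at h1
  refine h1.trans ?_
  have h2 : ∀ σ, ‖ghostDensity η σ‖ = ghostDensity η σ := fun σ =>
    by rw [Real.norm_eq_abs, abs_of_nonneg (ghostDensity_nonneg η σ)]
  simp only [h2]
  exact setIntegral_le_integral (integrable_ghostDensity hη)
    (Filter.Eventually.of_forall (ghostDensity_nonneg η))

lemma one_le_ghostA {η : ℝ} (hη : 0 < η) (s : ℝ) : 1 ≤ ghostA η s := by
  have := (abs_le.1 (abs_integral_ghostDensity_le hη s)).2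
  unfold ghostA; linarith

lemma ghostA_le {η : ℝ} (hη : 0 < η) (s : ℝ) : ghostA η s ≤ 1 + 2 * ghostMass η := by
  have := (abs_le.1 (abs_integral_ghostDensity_le hη s)).1
  unfold ghostA; linarith

lemma hasDerivAt_ghostA (η s : ℝ) : HasDerivAt (ghostA η) (-ghostDensity η s) s := by
  have := (continuous_ghostDensity η).integral_hasStrictDerivAt 0 s
  exact this.hasDerivAt.const_sub _

lemma contDiff_ghostA (η : ℝ) : ContDiff ℝ 1 (ghostA η) := by
  rw [contDiff_one_iff_deriv]
  refine ⟨fun s => (hasDerivAt_ghostA η s).differentiableAt, ?_⟩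
  have : deriv (ghostA η) = fun s => -ghostDensity η s :=
    funext fun s => (hasDerivAt_ghostA η s).deriv
  rw [this]
  exact (continuous_ghostDensity η).neg

lemma contDiff_cutB (N : ℝ) : ContDiff ℝ 1 (cutB N) := by
  unfold cutB
  exact (Real.smoothTransition.contDiff (n := 1)).comp (by fun_prop)

lemma cutB_nonneg (N s : ℝ) : 0 ≤ cutB N s := Real.smoothTransition.nonneg _

lemma cutB_le_one (N s : ℝ) : cutB N s ≤ 1 := Real.smoothTransition.le_one _

lemma cutB_eq_zero {N s : ℝ} (h : N + 1 ≤ s) : cutB N s = 0 :=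
  Real.smoothTransition.zero_of_nonpos (by linarith)

lemma cutB_eq_one {N s : ℝ} (h : s ≤ N) : cutB N s = 1 :=
  Real.smoothTransition.one_of_one_le (by linarith)

lemma deriv_cutB_nonpos (N s : ℝ) : deriv (cutB N) s ≤ 0 := by
  have : Antitone (cutB N) := fun a b hab => Real.smoothTransition.monotone (by linarith)
  exact this.deriv_nonpos

lemma norm_le_rhoE (ε : ℝ) (x : Spc 3) : ‖x‖ ≤ rhoE ε x := by
  apply Real.le_sqrt_of_sq_le; nlinarith [sq_nonneg ε]

lemma rhoE_pos {ε : ℝ} (hε : 0 < ε) (x : Spc 3) : 0 < rhoE ε x := by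
  unfold rhoE; positivity

lemma contDiff_rhoE {ε : ℝ} (hε : 0 < ε) : ContDiff ℝ 1 (rhoE ε) := by
  unfold rhoE
  refine ContDiff.sqrt (contDiff_const.add (contDiff_norm_sq ℝ)) fun x => ?_
  positivity

lemma sum_sq_div_rhoE_le {ε : ℝ} (hε : 0 < ε) (x : Spc 3) :
    ∑ j, (x j / rhoE ε x) ^ 2 ≤ 1 := by
  have h1 : ∑ j, (x j) ^ 2 = ‖x‖ ^ 2 := by
    rw [EuclideanSpace.norm_sq_eq]; simp
  have h2 : 0 < rhoE ε x := rhoE_pos hε x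
  simp only [div_pow]
  rw [← Finset.sum_div, h1, div_le_one (by positivity)]
  exact pow_le_pow_left₀ (norm_nonneg _) (norm_le_rhoE ε x) 2

lemma fderiv_rhoE_single {ε : ℝ} (hε : 0 < ε) (x : Spc 3) (j : Fin 3) :
    fderiv ℝ (rhoE ε) x (EuclideanSpace.single j 1) = x j / rhoE ε x := by
  have h1 : HasFDerivAt (fun x : Spc 3 => ε ^ 2 + ‖x‖ ^ 2) (2 • innerSL ℝ x) x :=
    (hasStrictFDerivAt_norm_sq x).hasFDerivAt.const_add _
  have h2 := h1.sqrt (by positivity)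
  have h3 : fderiv ℝ (rhoE ε) x = _ := h2.fderiv
  rw [h3]
  have h4 : 0 < √(ε ^ 2 + ‖x‖ ^ 2) := rhoE_pos hε x
  simp [rhoE, EuclideanSpace.inner_single_right]
  field_simp

lemma contDiff_wgt (η : ℝ) {ε : ℝ} (hε : 0 < ε) (N : ℝ) : ContDiff ℝ 1 (wgt η ε N) := by
  have h := (contDiff_rhoE hε).comp (contDiff_snd (𝕜 := ℝ) (E := ℝ) (F := Spc 3) (n := 1))
  have h' := contDiff_fst (𝕜 := ℝ) (E := ℝ) (F := Spc 3) (n := 1)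
  exact ((contDiff_ghostA η).comp (h'.sub h)).mul ((contDiff_cutB N).comp (h'.add h))

lemma inCone_wgt (η ε N : ℝ) : InCone (N + 1) (wgt η ε N) := by
  intro p hp
  have := norm_le_rhoE ε p.2
  simp [wgt, cutB_eq_zero (show N + 1 ≤ p.1 + rhoE ε p.2 by linarith)]

lemma wgt_nonneg {η : ℝ} (hη : 0 < η) (ε N : ℝ) (p : STn 3) : 0 ≤ wgt η ε N p :=
  mul_nonneg (by linarith [one_le_ghostA hη (p.1 - rhoE ε p.2)]) (cutB_nonneg _ _)

lemma wgt_le {η : ℝ} (hη : 0 < η) (ε N : ℝ) (p : STn 3) :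
    wgt η ε N p ≤ 1 + 2 * ghostMass η := by
  have h1 := one_le_ghostA hη (p.1 - rhoE ε p.2)
  have h2 := ghostA_le hη (p.1 - rhoE ε p.2)
  have h3 := cutB_nonneg N (p.1 + rhoE ε p.2)
  have h4 := cutB_le_one N (p.1 + rhoE ε p.2)
  unfold wgt; nlinarith

lemma cutB_le_wgt {η : ℝ} (hη : 0 < η) (ε N : ℝ) (p : STn 3) :
    cutB N (p.1 + rhoE ε p.2) ≤ wgt η ε N p :=
  le_mul_of_one_le_left (cutB_nonneg _ _) (one_le_ghostA hη _)

/-- The derivative of the weight `A(t - ρ) B(t + ρ)` in an arbitrary direction. -/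
lemma dirD_wgt (η : ℝ) {ε : ℝ} (hε : 0 < ε) (N : ℝ) (p v : STn 3) :
    dirD v (wgt η ε N) p =
      -ghostDensity η (p.1 - rhoE ε p.2) * cutB N (p.1 + rhoE ε p.2)
          * (v.1 - fderiv ℝ (rhoE ε) p.2 v.2)
        + ghostA η (p.1 - rhoE ε p.2) * deriv (cutB N) (p.1 + rhoE ε p.2)
          * (v.1 + fderiv ℝ (rhoE ε) p.2 v.2) := by
  have hr : HasFDerivAt (fun q : STn 3 => rhoE ε q.2)
      ((fderiv ℝ (rhoE ε) p.2).comp (ContinuousLinearMap.snd ℝ ℝ (Spc 3))) p :=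
    (((contDiff_rhoE hε).differentiable (by simp) p.2).hasFDerivAt).comp p hasFDerivAt_snd
  have hf : HasFDerivAt (fun q : STn 3 => q.1) (ContinuousLinearMap.fst ℝ ℝ (Spc 3)) p :=
    hasFDerivAt_fst
  have hA := (hasDerivAt_ghostA η (p.1 - rhoE ε p.2)).comp_hasFDerivAt p (hf.sub hr)
  have hB := (((contDiff_cutB N).differentiable (by simp)
    (p.1 + rhoE ε p.2)).hasDerivAt).comp_hasFDerivAt p (hf.add hr)
  have h := (hA.mul hB).fderiv
  have h' : fderiv ℝ (wgt η ε N) p = _ := h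
  unfold dirD
  rw [h']
  simp
  ring

/-! ### The weighted energy inequality -/

/-- The energy density `|∂u|² / 2`. -/
noncomputable def enD (u : STn 3 → ℝ) (p : STn 3) : ℝ :=
  (1 / 2) * ((dtD u p) ^ 2 + ∑ j, (dxD j u p) ^ 2)

/-- The space-time density controlled by the ghost weight, regularized at `x = 0` by `ε` and
localized by the cutoff. -/
noncomputable def goodD (η ε N : ℝ) (u : STn 3 → ℝ) (p : STn 3) : ℝ :=
  ghostDensity η (p.1 - rhoE ε p.2) * cutB N (p.1 + rhoE ε p.2) *
    ∑ j, (dxD j u p + p.2 j / rhoE ε p.2 * dtD u p) ^ 2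

lemma dirD_mul {f g : STn 3 → ℝ} (hf : ContDiff ℝ 1 f) (hg : ContDiff ℝ 1 g) (v p : STn 3) :
    dirD v (fun q => f q * g q) p = dirD v f p * g p + f p * dirD v g p := by
  have := ((hf.differentiable (by simp) p).hasFDerivAt.mul
    (hg.differentiable (by simp) p).hasFDerivAt).fderiv
  have h' : fderiv ℝ (fun q => f q * g q) p = _ := this
  unfold dirD
  rw [h']
  simp
  ring

lemma contDiff_dirD {u : STn 3 → ℝ} (hu : ContDiff ℝ ∞ u) (v : STn 3) :
    ContDiff ℝ ∞ (dirD v u) := by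
  unfold dirD
  exact (hu.fderiv_right (m := ∞) (by simp)).clm_apply contDiff_const

lemma dirD_comm {u : STn 3 → ℝ} (hu : ContDiff ℝ ∞ u) (v w p : STn 3) :
    dirD v (dirD w u) p = dirD w (dirD v u) p := by
  have hs : IsSymmSndFDerivAt ℝ u p := 
    (contDiff_infty.1 hu 2).contDiffAt.isSymmSndFDerivAt (by simp)
  have hd : DifferentiableAt ℝ (fderiv ℝ u) p :=
    (hu.fderiv_right (m := ∞) (by simp)).differentiable (by simp) p
  have key : ∀ a b : STn 3, dirD a (dirD b u) p = fderiv ℝ (fderiv ℝ u) p a b := by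
    intro a b
    have h := (hd.hasFDerivAt.clm_apply (hasFDerivAt_const b p)).fderiv
    have h' : fderiv ℝ (dirD b u) p = _ := h
    rw [show dirD a (dirD b u) p = fderiv ℝ (dirD b u) p a from rfl, h']
    simp
  rw [key, key, hs.eq]

lemma contDiff_enD {u : STn 3 → ℝ} (hu : ContDiff ℝ ∞ u) : ContDiff ℝ ∞ (enD u) := by
  have h0 : ContDiff ℝ ∞ (dtD u) := contDiff_dirD hu _
  have h1 : ∀ j, ContDiff ℝ ∞ (dxD j u) := fun j => contDiff_dirD hu _
  unfold enD
  exact contDiff_const.mul ((h0.pow 2).add (ContDiff.sum fun j _ => (h1 j).pow 2))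

lemma enD_nonneg (u : STn 3 → ℝ) (p : STn 3) : 0 ≤ enD u p := by unfold enD; positivity

lemma dirD_enD {u : STn 3 → ℝ} (hu : ContDiff ℝ ∞ u) (v p : STn 3) :
    dirD v (enD u) p = dtD u p * dirD v (dtD u) p + ∑ j, dxD j u p * dirD v (dxD j u) p := by
  have h0 : HasFDerivAt (dtD u) (fderiv ℝ (dtD u) p) p :=
    ((contDiff_dirD hu _).differentiable (by simp) p).hasFDerivAt
  have h1 : ∀ j, HasFDerivAt (dxD j u) (fderiv ℝ (dxD j u) p) p := fun j =>
    ((contDiff_dirD hu _).differentiable (by simp) p).hasFDerivAt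
  have h := (((h0.pow 2).add (HasFDerivAt.fun_sum (u := Finset.univ)
    fun j _ => (h1 j).pow 2)).const_mul (1 / 2)).fderiv
  have h' : fderiv ℝ (enD u) p = _ := h
  rw [show dirD v (enD u) p = fderiv ℝ (enD u) p v from rfl, h']
  simp [dirD, Fin.sum_univ_three]
  ring

/-- The multiplier identity: multiply the equation by `w ∂ₜu`. -/
lemma multiplier_identity {u w : STn 3 → ℝ} (hu : ContDiff ℝ ∞ u) (hw : ContDiff ℝ 1 w)
    (p : STn 3) :
    dtD (fun q => w q * enD u q) p - ∑ j, dxD j (fun q => w q * (dtD u q * dxD j u q)) p =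
      dtD w p * enD u p - ∑ j, dxD j w p * (dtD u p * dxD j u p)
        + w p * (dtD u p * boxD u p) := by
  have h0 : ContDiff ℝ 1 (dtD u) := (contDiff_dirD hu _).of_le (by simp)
  have h1 : ∀ j, ContDiff ℝ 1 (dxD j u) := fun j => (contDiff_dirD hu _).of_le (by simp)
  have he : ContDiff ℝ 1 (enD u) := (contDiff_enD hu).of_le (by simp)
  have a0 : dtD (fun q => w q * enD u q) p = dtD w p * enD u p + w p *
      (dtD u p * dtD (dtD u) p + ∑ j, dxD j u p * dtD (dxD j u) p) := by
    have h := dirD_mul hw he (1, 0) p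
    rw [dirD_enD hu] at h
    exact h
  have a1 : ∀ j, dxD j (fun q => w q * (dtD u q * dxD j u q)) p =
      dxD j w p * (dtD u p * dxD j u p) +
        w p * (dtD (dxD j u) p * dxD j u p + dtD u p * dxD j (dxD j u) p) := by
    intro j
    have hc : dtD (dxD j u) p = dxD j (dtD u) p := dirD_comm hu _ _ _
    have h := dirD_mul hw (h0.mul (h1 j)) (0, EuclideanSpace.single j 1) p
    rw [dirD_mul h0 (h1 j)] at h
    rw [hc]
    exact h
  rw [a0]
  simp only [a1, boxD, lapD, Fin.sum_univ_three]
  ring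

/-- Pointwise form of the energy inequality. Both `A(t - ρ)` and `B(t + ρ)` are nonincreasing and
`|∇ρ| ≤ 1`, so that the two bulk terms have a sign; the first one is kept. -/
lemma multiplier_ineq {η : ℝ} (hη : 0 < η) {ε : ℝ} (hε : 0 < ε) (N : ℝ) {u : STn 3 → ℝ}
    (hu : ContDiff ℝ ∞ u) (p : STn 3) :
    dtD (fun q => wgt η ε N q * enD u q) p
        - ∑ j, dxD j (fun q => wgt η ε N q * (dtD u q * dxD j u q)) p
      ≤ wgt η ε N p * (dtD u p * boxD u p) - (1 / 2) * goodD η ε N u p := by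
  rw [multiplier_identity hu (contDiff_wgt η hε N)]
  have ht : dtD (wgt η ε N) p = _ := dirD_wgt η hε N p (1, 0)
  have hx : ∀ j, dxD j (wgt η ε N) p = _ := fun j =>
    dirD_wgt η hε N p (0, EuclideanSpace.single j 1)
  have hs := sum_sq_div_rhoE_le hε p.2
  simp only [fderiv_rhoE_single hε] at hx
  simp only [map_zero, sub_zero, add_zero] at ht
  have hA : 0 ≤ ghostA η (p.1 - rhoE ε p.2) := by
    linarith [one_le_ghostA hη (p.1 - rhoE ε p.2)]
  have hD := ghostDensity_nonneg η (p.1 - rhoE ε p.2)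
  have hB := cutB_nonneg N (p.1 + rhoE ε p.2)
  have hB' := deriv_cutB_nonpos N (p.1 + rhoE ε p.2)
  rw [ht]
  simp only [hx]
  unfold goodD enD
  generalize ghostA η (p.1 - rhoE ε p.2) = A at *
  generalize ghostDensity η (p.1 - rhoE ε p.2) = D at *
  generalize cutB N (p.1 + rhoE ε p.2) = B at *
  generalize deriv (cutB N) (p.1 + rhoE ε p.2) = B' at *
  generalize wgt η ε N p * (dtD u p * boxD u p) = G at *
  simp only [Fin.sum_univ_three] at *
  generalize p.2 0 / rhoE ε p.2 = r0 at *
  generalize p.2 1 / rhoE ε p.2 = r1 at *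
  generalize p.2 2 / rhoE ε p.2 = r2 at *
  generalize dtD u p = a at *
  generalize dxD 0 u p = b0 at *
  generalize dxD 1 u p = b1 at *
  generalize dxD 2 u p = b2 at *
  -- `k1` is the slack in the ghost-weight term, `k2` the whole term with the cutoff's derivative
  have k1 : 0 ≤ D * B * (a ^ 2 * (1 - (r0 ^ 2 + r1 ^ 2 + r2 ^ 2))) :=
    mul_nonneg (mul_nonneg hD hB) (mul_nonneg (sq_nonneg a) (by linarith))
  have k2 : 0 ≤ A * (-B') * (a ^ 2 * (1 - (r0 ^ 2 + r1 ^ 2 + r2 ^ 2)) +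
      ((b0 - r0 * a) ^ 2 + (b1 - r1 * a) ^ 2 + (b2 - r2 * a) ^ 2)) :=
    mul_nonneg (mul_nonneg hA (by linarith))
      (add_nonneg (mul_nonneg (sq_nonneg a) (by linarith)) (by positivity))
  linarith

lemma continuous_goodD (η : ℝ) {ε : ℝ} (hε : 0 < ε) (N : ℝ) {u : STn 3 → ℝ}
    (hu : ContDiff ℝ ∞ u) : Continuous (goodD η ε N u) := by
  have h0 : Continuous (dtD u) := (contDiff_dirD hu _).continuous
  have h1 : ∀ j, Continuous (dxD j u) := fun j => (contDiff_dirD hu _).continuous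
  have h2 := (contDiff_rhoE hε).continuous
  have h3 := continuous_ghostDensity η
  have h4 := (contDiff_cutB N).continuous
  have h5 : ∀ p : STn 3, rhoE ε p.2 ≠ 0 := fun p => (rhoE_pos hε p.2).ne'
  unfold goodD
  fun_prop (disch := assumption)

lemma inCone_goodD (η ε N : ℝ) (u : STn 3 → ℝ) : InCone (N + 1) (goodD η ε N u) := by
  intro p hp
  have := norm_le_rhoE ε p.2
  simp [goodD, cutB_eq_zero (show N + 1 ≤ p.1 + rhoE ε p.2 by linarith)]

lemma goodD_nonneg (η ε N : ℝ) (u : STn 3 → ℝ) (p : STn 3) : 0 ≤ goodD η ε N u p :=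
  mul_nonneg (mul_nonneg (ghostDensity_nonneg _ _) (cutB_nonneg _ _)) (by positivity)

lemma continuous_boxD {u : STn 3 → ℝ} (hu : ContDiff ℝ ∞ u) : Continuous (boxD u) := by
  have h0 : Continuous (dtD (dtD u)) := (contDiff_dirD (contDiff_dirD hu _) _).continuous
  have h1 : ∀ j, Continuous (dxD j (dxD j u)) := fun j =>
    (contDiff_dirD (contDiff_dirD hu _) _).continuous
  unfold boxD lapD
  fun_prop

/-- The integrated energy inequality. No decay of `u` is needed, as the weight is supported in
a backward light cone. -/
lemma energy_ineq {η : ℝ} (hη : 0 < η) {ε : ℝ} (hε : 0 < ε) (N : ℝ) {u : STn 3 → ℝ}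
    (hu : ContDiff ℝ ∞ u) {t : ℝ} (ht : 0 ≤ t) :
    (∫ x, wgt η ε N (t, x) * enD u (t, x)) +
        (1 / 2) * ∫ z in Set.Ioc 0 t ×ˢ (Set.univ : Set (Spc 3)), goodD η ε N u z
      ≤ (∫ x, wgt η ε N (0, x) * enD u (0, x)) +
        ∫ z in Set.Ioc 0 t ×ˢ (Set.univ : Set (Spc 3)),
          wgt η ε N z * (dtD u z * boxD u z) := by
  have hw := contDiff_wgt η hε N
  have hcone := inCone_wgt η ε N
  have h0 : ContDiff ℝ 1 (dtD u) := (contDiff_dirD hu _).of_le (by simp)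
  have h1 : ∀ j, ContDiff ℝ 1 (dxD j u) := fun j => (contDiff_dirD hu _).of_le (by simp)
  have he : ContDiff ℝ 1 (enD u) := (contDiff_enD hu).of_le (by simp)
  have cP : ContDiff ℝ 1 (fun q => wgt η ε N q * enD u q) := hw.mul he
  have cQ : ∀ j, ContDiff ℝ 1 (fun q => wgt η ε N q * (dtD u q * dxD j u q)) :=
    fun j => hw.mul (h0.mul (h1 j))
  have sP := hcone.mul_right (enD u)
  have sQ := fun j => hcone.mul_right (fun q => dtD u q * dxD j u q)
  set S := Set.Ioc 0 t ×ˢ (Set.univ : Set (Spc 3))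
  have iP : IntegrableOn (dtD (fun q => wgt η ε N q * enD u q)) S :=
    (sP.dirD _).integrableOn (continuous_dirD cP _) t
  have iQ : ∀ j, IntegrableOn (dxD j (fun q => wgt η ε N q * (dtD u q * dxD j u q))) S :=
    fun j => ((sQ j).dirD _).integrableOn (continuous_dirD (cQ j) _) t
  have iG : IntegrableOn (goodD η ε N u) S :=
    (inCone_goodD η ε N u).integrableOn (continuous_goodD η hε N hu) t
  have iF : IntegrableOn (fun z => wgt η ε N z * (dtD u z * boxD u z)) S :=
    (hcone.mul_right (fun z => dtD u z * boxD u z)).integrableOn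
      (hw.continuous.mul (h0.continuous.mul (continuous_boxD hu))) t
  have key := integral_mono (μ := volume.restrict S)
    (iP.sub (integrable_finsetSum Finset.univ fun j _ => iQ j)) (iF.sub (iG.const_mul (1 / 2)))
    (fun p => by simpa using multiplier_ineq hη hε N hu p)
  have l1 := integral_sub (μ := volume.restrict S) iP
    (integrable_finsetSum Finset.univ fun j _ => iQ j)
  have l2 := integral_sub (μ := volume.restrict S) iF (iG.const_mul (1 / 2))
  rw [integral_finsetSum _ fun j _ => iQ j] at l1
  rw [integral_const_mul] at l2
  simp only [S, integral_dxD (sQ _) (cQ _), integral_dtD sP cP ht] at l1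
  simp only [Pi.sub_apply, S] at key l2
  simp only [Finset.sum_const_zero, sub_zero] at l1
  linarith

/-! ### Closing the estimate -/

lemma lintegral_ofReal_sq {α : Type*} [MeasurableSpace α] (μ : Measure α) (f : α → ℝ) :
    ∫⁻ x, ENNReal.ofReal (f x ^ 2) ∂μ = (eLpNorm f 2 μ) ^ 2 := by
  have h := eLpNorm_nnreal_pow_eq_lintegral (f := f) (μ := μ) (p := 2) (by simp)
  have e : ∀ x, ENNReal.ofReal (f x ^ 2) = ‖f x‖ₑ ^ ((2 : NNReal) : ℝ) := by
    intro x
    rw [← ofReal_norm, ← sq_abs, ENNReal.ofReal_pow (abs_nonneg _), Real.norm_eq_abs,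
      show ((2 : NNReal) : ℝ) = ((2 : ℕ) : ℝ) by norm_num, ENNReal.rpow_natCast]
  simp only [e]
  rw [← h, show ((2 : NNReal) : ℝ) = ((2 : ℕ) : ℝ) by norm_num, ENNReal.rpow_natCast]
  rfl

lemma le_ofReal_of_sq_le {a : ℝ≥0∞} {c : ℝ} (hc : 0 ≤ c) (h : a ^ 2 ≤ ENNReal.ofReal (c ^ 2)) :
    a ≤ ENNReal.ofReal c := by
  rw [ENNReal.ofReal_pow hc] at h
  exact (ENNReal.pow_le_pow_left_iff (by norm_num)).1 h

/-- Fatou's lemma in the form used to remove the regularization and the cutoff. -/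
lemma lintegral_ofReal_le_of_tendsto {α : Type*} [MeasurableSpace α] {μ : Measure α}
    {f : ℕ → α → ℝ} {g : α → ℝ} {c : ℝ≥0∞} (hf : ∀ k, Measurable (f k))
    (hlim : ∀ x, Filter.Tendsto (fun k => f k x) Filter.atTop (nhds (g x)))
    (hb : ∀ k, ∫⁻ x, ENNReal.ofReal (f k x) ∂μ ≤ c) :
    ∫⁻ x, ENNReal.ofReal (g x) ∂μ ≤ c := by
  have h1 : ∀ x, ENNReal.ofReal (g x) =
      Filter.liminf (fun k => ENNReal.ofReal (f k x)) Filter.atTop := fun x =>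
    ((ENNReal.continuous_ofReal.tendsto _).comp (hlim x)).liminf_eq.symm
  simp only [h1]
  refine (lintegral_liminf_le fun k => (hf k).ennreal_ofReal).trans ?_
  exact Filter.liminf_le_of_frequently_le' (Filter.Frequently.of_forall hb)

lemma enD_eq (u : STn 3 → ℝ) (p : STn 3) : enD u p = (1 / 2) * gradN u p ^ 2 := by
  rw [enD, gradN, Real.sq_sqrt (by positivity)]

/-- Cauchy–Schwarz in `x` for the source term. -/
lemma source_le {η : ℝ} (hη : 0 < η) {ε : ℝ} (hε : 0 < ε) (N : ℝ) {u : STn 3 → ℝ}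
    (hu : ContDiff ℝ ∞ u) {T t m Φ : ℝ} (htT : t ≤ T) (hm : 0 ≤ m) (hΦ : 0 ≤ Φ)
    (hE : ∀ s ∈ Set.Icc 0 T, ∫ x, wgt η ε N (s, x) * enD u (s, x) ≤ m ^ 2)
    (hF : ∫⁻ τ in Set.Ioc 0 T, eLpNorm (fun x => boxD u (τ, x)) 2 volume ≤ ENNReal.ofReal Φ) :
    ∫ z in Set.Ioc 0 t ×ˢ (Set.univ : Set (Spc 3)), wgt η ε N z * (dtD u z * boxD u z)
      ≤ √(2 * (1 + 2 * ghostMass η)) * m * Φ := by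
  set K := 1 + 2 * ghostMass η with hK
  have hM := ghostMass_nonneg η
  have hw := (contDiff_wgt η hε N).continuous
  have hcone := inCone_wgt η ε N
  have h0 : Continuous (dtD u) := (contDiff_dirD hu _).continuous
  have hb := continuous_boxD hu
  have hen := (contDiff_enD hu).continuous
  have iF : IntegrableOn (fun z => wgt η ε N z * (dtD u z * boxD u z))
      (Set.Ioc 0 t ×ˢ (Set.univ : Set (Spc 3))) :=
    (hcone.mul_right (fun z => dtD u z * boxD u z)).integrableOn (hw.mul (h0.mul hb)) t
  have hslice : ∀ s ∈ Set.Ioc 0 t,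
      ‖∫ x, wgt η ε N (s, x) * (dtD u (s, x) * boxD u (s, x))‖ₑ ≤
        ENNReal.ofReal (√(2 * K) * m) * eLpNorm (fun x => boxD u (s, x)) 2 volume := by
    intro s hs
    have hs' : s ∈ Set.Icc 0 T := ⟨hs.1.le, hs.2.trans htT⟩
    have h1 : eLpNorm (fun x => wgt η ε N (s, x) * dtD u (s, x)) 2 volume ≤
        ENNReal.ofReal (√(2 * K) * m) := by
      apply le_ofReal_of_sq_le (by positivity)
      rw [← lintegral_ofReal_sq]
      have hp : ∀ x, (wgt η ε N (s, x) * dtD u (s, x)) ^ 2 ≤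
          2 * K * (wgt η ε N (s, x) * enD u (s, x)) := by
        intro x
        have a1 := wgt_nonneg hη ε N (s, x)
        have a2 := wgt_le hη ε N (s, x)
        have a3 : dtD u (s, x) ^ 2 ≤ 2 * enD u (s, x) := by
          have : 0 ≤ ∑ j, (dxD j u (s, x)) ^ 2 := by positivity
          unfold enD; linarith
        calc (wgt η ε N (s, x) * dtD u (s, x)) ^ 2
            = wgt η ε N (s, x) * (wgt η ε N (s, x) * dtD u (s, x) ^ 2) := by ring
          _ ≤ K * (wgt η ε N (s, x) * (2 * enD u (s, x))) := by gcongr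
          _ = _ := by ring
      have hi : Integrable (fun x => wgt η ε N (s, x) * enD u (s, x)) :=
        (hcone.mul_right (enD u)).integrable_slice (hw.mul hen) s
      calc ∫⁻ x, ENNReal.ofReal ((wgt η ε N (s, x) * dtD u (s, x)) ^ 2)
          ≤ ∫⁻ x, ENNReal.ofReal (2 * K * (wgt η ε N (s, x) * enD u (s, x))) :=
            lintegral_mono fun x => ENNReal.ofReal_le_ofReal (hp x)
        _ = ENNReal.ofReal (∫ x, 2 * K * (wgt η ε N (s, x) * enD u (s, x))) := by
            rw [ofReal_integral_eq_lintegral_ofReal (hi.const_mul _)]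
            filter_upwards with x
            have := wgt_nonneg hη ε N (s, x)
            have := enD_nonneg u (s, x)
            simp only [Pi.zero_apply]
            positivity
        _ ≤ _ := by
            apply ENNReal.ofReal_le_ofReal
            rw [integral_const_mul, mul_pow, Real.sq_sqrt (by positivity)]
            have := hE s hs'
            gcongr
    have h2 : eLpNorm ((fun x => wgt η ε N (s, x) * dtD u (s, x)) •
        (fun x => boxD u (s, x))) 1 volume ≤ _ :=
      eLpNorm_smul_le_mul_eLpNorm (p := 2) (q := 2) (r := 1)
        (by apply Continuous.aestronglyMeasurable; fun_prop)
        (by apply Continuous.aestronglyMeasurable; fun_prop)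
    calc _ ≤ ∫⁻ x, ‖wgt η ε N (s, x) * (dtD u (s, x) * boxD u (s, x))‖ₑ :=
          enorm_integral_le_lintegral_enorm _
      _ = eLpNorm ((fun x => wgt η ε N (s, x) * dtD u (s, x)) •
            (fun x => boxD u (s, x))) 1 volume := by
          rw [eLpNorm_one_eq_lintegral_enorm]
          simp [mul_assoc]
      _ ≤ _ := h2
      _ ≤ _ := by gcongr
  have hb0 : 0 ≤ √(2 * K) * m * Φ := by positivity
  rw [← ENNReal.ofReal_le_ofReal_iff hb0, Measure.volume_eq_prod, setIntegral_prod _ iF]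
  simp only [Measure.restrict_univ]
  calc _ ≤ ‖∫ s in Set.Ioc 0 t, ∫ x, wgt η ε N (s, x) * (dtD u (s, x) * boxD u (s, x))‖ₑ := by
        rw [← ofReal_norm]
        exact ENNReal.ofReal_le_ofReal (Real.le_norm_self _)
    _ ≤ ∫⁻ s in Set.Ioc 0 t, ‖∫ x, wgt η ε N (s, x) * (dtD u (s, x) * boxD u (s, x))‖ₑ :=
        enorm_integral_le_lintegral_enorm _
    _ ≤ ∫⁻ s in Set.Ioc 0 t, ENNReal.ofReal (√(2 * K) * m) *
          eLpNorm (fun x => boxD u (s, x)) 2 volume :=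
        setLIntegral_mono' measurableSet_Ioc hslice
    _ = ENNReal.ofReal (√(2 * K) * m) *
          ∫⁻ s in Set.Ioc 0 t, eLpNorm (fun x => boxD u (s, x)) 2 volume :=
        lintegral_const_mul' _ _ ENNReal.ofReal_ne_top
    _ ≤ ENNReal.ofReal (√(2 * K) * m) * ENNReal.ofReal Φ := by
        gcongr
        exact (lintegral_mono_set (Set.Ioc_subset_Ioc_right htT)).trans hF
    _ = _ := (ENNReal.ofReal_mul (by positivity)).symm

/-- The localized and regularized form of the estimate, with constants independent of `ε`, `N`. -/
lemma localized_bound {η : ℝ} (hη : 0 < η) {ε : ℝ} (hε : 0 < ε) (N : ℝ) {u : STn 3 → ℝ}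
    (hu : ContDiff ℝ ∞ u) {T G Φ : ℝ} (hT : 0 ≤ T) (hG : 0 ≤ G) (hΦ : 0 ≤ Φ)
    (hG0 : eLpNorm (fun x => gradN u (0, x)) 2 volume ≤ ENNReal.ofReal G)
    (hF : ∫⁻ τ in Set.Ioc 0 T, eLpNorm (fun x => boxD u (τ, x)) 2 volume ≤ ENNReal.ofReal Φ) :
    (∀ t ∈ Set.Icc 0 T, ∫ x, wgt η ε N (t, x) * enD u (t, x) ≤
      2 * (1 + 2 * ghostMass η) * (G + Φ) ^ 2) ∧
    (1 / 2) * ∫ z in Set.Ioc 0 T ×ˢ (Set.univ : Set (Spc 3)), goodD η ε N u z ≤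
      2 * (1 + 2 * ghostMass η) * (G + Φ) ^ 2 := by
  set K := 1 + 2 * ghostMass η with hK
  have hM := ghostMass_nonneg η
  have hK0 : 0 < K := by positivity
  have hw := (contDiff_wgt η hε N).continuous
  have hcone := inCone_wgt η ε N
  have h0 : Continuous (dtD u) := (contDiff_dirD hu _).continuous
  have hb := continuous_boxD hu
  have hen := (contDiff_enD hu).continuous
  set E : ℝ → ℝ := fun t => ∫ x, wgt η ε N (t, x) * enD u (t, x) with hEdef
  have hpos : ∀ t x, 0 ≤ wgt η ε N (t, x) * enD u (t, x) := fun t x =>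
    mul_nonneg (wgt_nonneg hη ε N _) (enD_nonneg u _)
  have hEpos : ∀ t, 0 ≤ E t := fun t => integral_nonneg (hpos t)
  have hgpos : ∀ t, 0 ≤ ∫ z in Set.Ioc 0 t ×ˢ (Set.univ : Set (Spc 3)), goodD η ε N u z :=
    fun t => integral_nonneg (goodD_nonneg η ε N u)
  have hE0 : E 0 ≤ K / 2 * G ^ 2 := by
    have hi : Integrable (fun x => wgt η ε N (0, x) * enD u (0, x)) :=
      (hcone.mul_right (enD u)).integrable_slice (hw.mul hen) 0
    rw [← ENNReal.ofReal_le_ofReal_iff (by positivity), hEdef,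
      ofReal_integral_eq_lintegral_ofReal hi (Filter.Eventually.of_forall (hpos 0))]
    calc _ ≤ ∫⁻ x, ENNReal.ofReal (K / 2) * ENNReal.ofReal (gradN u (0, x) ^ 2) := by
          apply lintegral_mono
          intro x
          simp only
          rw [← ENNReal.ofReal_mul (by positivity)]
          apply ENNReal.ofReal_le_ofReal
          have a2 := wgt_le hη ε N (0, x)
          rw [enD_eq]
          nlinarith [sq_nonneg (gradN u (0, x))]
      _ = ENNReal.ofReal (K / 2) * (eLpNorm (fun x => gradN u (0, x)) 2 volume) ^ 2 := by
          rw [lintegral_const_mul' _ _ (by simp), lintegral_ofReal_sq]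
      _ ≤ ENNReal.ofReal (K / 2) * (ENNReal.ofReal G) ^ 2 := by gcongr
      _ = _ := by rw [ENNReal.ofReal_mul (by positivity), ENNReal.ofReal_pow hG]
  -- finiteness of the supremum, so that it can be absorbed below; the bound depends on `u`, `N`
  have hbdd : BddAbove (E '' Set.Icc 0 T) := by
    have iF : IntegrableOn (fun z => wgt η ε N z * (dtD u z * boxD u z))
        (Set.Ioc 0 T ×ˢ (Set.univ : Set (Spc 3))) :=
      (hcone.mul_right (fun z => dtD u z * boxD u z)).integrableOn (hw.mul (h0.mul hb)) T
    refine ⟨E 0 + ∫ z in Set.Ioc 0 T ×ˢ (Set.univ : Set (Spc 3)),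
      ‖wgt η ε N z * (dtD u z * boxD u z)‖, ?_⟩
    rintro _ ⟨t, ht, rfl⟩
    have a1 := energy_ineq hη hε N hu ht.1
    have a2 : ∫ z in Set.Ioc 0 t ×ˢ (Set.univ : Set (Spc 3)),
        wgt η ε N z * (dtD u z * boxD u z) ≤
        ∫ z in Set.Ioc 0 T ×ˢ (Set.univ : Set (Spc 3)),
          ‖wgt η ε N z * (dtD u z * boxD u z)‖ := by
      refine (Real.le_norm_self _).trans ((norm_integral_le_integral_norm _).trans ?_)
      refine setIntegral_mono_set iF.norm (Filter.Eventually.of_forall fun _ => norm_nonneg _) ?_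
      exact (Set.prod_mono_left (Set.Ioc_subset_Ioc_right ht.2)).eventuallyLE
    have a3 := hgpos t
    simp only [hEdef]
    linarith
  set I := sSup (E '' Set.Icc 0 T) with hI
  have hle : ∀ t ∈ Set.Icc 0 T, E t ≤ I := fun t ht => le_csSup hbdd ⟨t, ht, rfl⟩
  have hI0 : 0 ≤ I := (hEpos 0).trans (hle 0 ⟨le_rfl, hT⟩)
  set m := √I with hm
  have hm0 : 0 ≤ m := Real.sqrt_nonneg _
  have hm2 : m ^ 2 = I := Real.sq_sqrt hI0
  have hstep : ∀ t ∈ Set.Icc 0 T,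
      E t + (1 / 2) * ∫ z in Set.Ioc 0 t ×ˢ (Set.univ : Set (Spc 3)), goodD η ε N u z ≤
        K / 2 * G ^ 2 + √(2 * K) * m * Φ := by
    intro t ht
    have a1 := energy_ineq hη hε N hu ht.1
    have a2 := source_le hη hε N hu ht.2 hm0 hΦ (fun s hs => hm2 ▸ hle s hs) hF
    simp only [hEdef] at *
    linarith
  have hmain : m ^ 2 ≤ K / 2 * G ^ 2 + √(2 * K) * m * Φ := by
    rw [hm2]
    refine csSup_le (s := E '' Set.Icc 0 T) (Set.image_nonempty.2 ⟨0, le_rfl, hT⟩) ?_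
    rintro _ ⟨t, ht, rfl⟩
    linarith [hstep t ht, hgpos t]
  set k := √(2 * K) with hk
  have hk0 : 0 ≤ k := Real.sqrt_nonneg _
  have hk2 : k ^ 2 = 2 * K := Real.sq_sqrt (by positivity)
  have hmD : m ≤ k * (G + Φ) := by
    by_contra hcon
    push Not at hcon
    have b1 : 0 ≤ k * G := by positivity
    have b2 : 0 ≤ k * Φ := by positivity
    have b3 : K / 2 * G ^ 2 = (k * G) ^ 2 / 4 := by rw [mul_pow, hk2]; ring
    nlinarith
  have hfin : K / 2 * G ^ 2 + k * m * Φ ≤ 2 * K * (G + Φ) ^ 2 := by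
    have b1 : k * m * Φ ≤ k * (k * (G + Φ)) * Φ := by gcongr
    have b2 : k * (k * (G + Φ)) * Φ = 2 * K * ((G + Φ) * Φ) := by rw [← hk2]; ring
    have b3 : 0 ≤ K * (G * Φ) := by positivity
    have b4 : 0 ≤ K * G ^ 2 := by positivity
    nlinarith
  refine ⟨fun t ht => ?_, ?_⟩
  · have := hstep t ht
    have := hgpos t
    show E t ≤ _
    linarith
  · have := hstep T ⟨hT, le_rfl⟩
    have := hEpos T
    linarith

/-! ### Removal of the localization -/

lemma tendsto_rhoE (x : Spc 3) :
    Filter.Tendsto (fun k : ℕ => rhoE (1 / ((k : ℝ) + 1)) x) Filter.atTop (nhds ‖x‖) := by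
  have h1 : Filter.Tendsto (fun k : ℕ => √((1 / ((k : ℝ) + 1)) ^ 2 + ‖x‖ ^ 2)) Filter.atTop
      (nhds (√(0 ^ 2 + ‖x‖ ^ 2))) :=
    ((tendsto_one_div_add_atTop_nhds_zero_nat.pow 2).add_const _).sqrt
  simpa [rhoE] using h1

lemma tendsto_cutB (t : ℝ) (x : Spc 3) :
    Filter.Tendsto (fun k : ℕ => cutB k (t + rhoE (1 / ((k : ℝ) + 1)) x)) Filter.atTop
      (nhds 1) := by
  apply tendsto_const_nhds.congr'
  have h1 := ((tendsto_rhoE x).const_add t).eventually_le_const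
    (show t + ‖x‖ < t + ‖x‖ + 1 by linarith)
  have h2 : ∀ᶠ k : ℕ in Filter.atTop, t + ‖x‖ + 1 ≤ (k : ℝ) :=
    tendsto_natCast_atTop_atTop.eventually_ge_atTop _
  filter_upwards [h1, h2] with k a b
  exact (cutB_eq_one (a.trans b)).symm

/-- At `x = 0` both sides vanish, by the convention `0 / 0 = 0`. -/
lemma tendsto_div_rhoE (x : Spc 3) (j : Fin 3) :
    Filter.Tendsto (fun k : ℕ => x j / rhoE (1 / ((k : ℝ) + 1)) x) Filter.atTop
      (nhds (x j / ‖x‖)) := by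
  by_cases hx : x = 0
  · simp [hx]
  · exact tendsto_const_nhds.div (tendsto_rhoE x) (norm_ne_zero_iff.2 hx)

lemma energy_bound {η : ℝ} (hη : 0 < η) {u : STn 3 → ℝ}
    (hu : ContDiff ℝ ∞ u) {T G Φ : ℝ} (hT : 0 ≤ T) (hG : 0 ≤ G) (hΦ : 0 ≤ Φ)
    (hG0 : eLpNorm (fun x => gradN u (0, x)) 2 volume ≤ ENNReal.ofReal G)
    (hF : ∫⁻ τ in Set.Ioc 0 T, eLpNorm (fun x => boxD u (τ, x)) 2 volume ≤ ENNReal.ofReal Φ)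
    {t : ℝ} (ht : t ∈ Set.Icc 0 T) :
    eLpNorm (fun x => gradN u (t, x)) 2 volume ≤
      ENNReal.ofReal (2 * √(1 + 2 * ghostMass η) * (G + Φ)) := by
  have hM := ghostMass_nonneg η
  have hen := (contDiff_enD hu).continuous
  apply le_ofReal_of_sq_le (by positivity)
  rw [← lintegral_ofReal_sq]
  refine lintegral_ofReal_le_of_tendsto
    (f := fun (k : ℕ) x => 2 * (cutB k (t + rhoE (1 / ((k : ℝ) + 1)) x) * enD u (t, x)))
    (fun k => ?_) (fun x => ?_) (fun k => ?_)
  · have h1 := (contDiff_cutB k).continuous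
    have h2 := (contDiff_rhoE (ε := 1 / ((k : ℝ) + 1)) (by positivity)).continuous
    apply Continuous.measurable
    fun_prop
  · have := ((tendsto_cutB t x).mul_const (enD u (t, x))).const_mul 2
    convert this using 2
    rw [enD_eq]; ring
  · have hε : 0 < 1 / ((k : ℝ) + 1) := by positivity
    have hb := (localized_bound hη hε k hu hT hG hΦ hG0 hF).1 t ht
    have hi : Integrable (fun x => wgt η (1 / ((k : ℝ) + 1)) k (t, x) * enD u (t, x)) :=
      ((inCone_wgt _ _ _).mul_right (enD u)).integrable_slice
        ((contDiff_wgt η hε k).continuous.mul hen) t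
    calc _ ≤ ∫⁻ x, ENNReal.ofReal
          (2 * (wgt η (1 / ((k : ℝ) + 1)) k (t, x) * enD u (t, x))) := by
          apply lintegral_mono
          intro x
          apply ENNReal.ofReal_le_ofReal
          have a1 := cutB_le_wgt hη (1 / ((k : ℝ) + 1)) k (t, x)
          have a2 := enD_nonneg u (t, x)
          gcongr
      _ = ENNReal.ofReal (∫ x, 2 * (wgt η (1 / ((k : ℝ) + 1)) k (t, x) * enD u (t, x))) := by
          rw [ofReal_integral_eq_lintegral_ofReal (hi.const_mul _)]
          filter_upwards with x
          have := wgt_nonneg hη (1 / ((k : ℝ) + 1)) k (t, x)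
          have := enD_nonneg u (t, x)
          simp only [Pi.zero_apply]
          positivity
      _ ≤ _ := by
          apply ENNReal.ofReal_le_ofReal
          rw [integral_const_mul, mul_pow, mul_pow, Real.sq_sqrt (by positivity)]
          linarith

lemma ghost_bound {η : ℝ} (hη : 0 < η) {u : STn 3 → ℝ}
    (hu : ContDiff ℝ ∞ u) {T G Φ : ℝ} (hT : 0 ≤ T) (hG : 0 ≤ G) (hΦ : 0 ≤ Φ)
    (hG0 : eLpNorm (fun x => gradN u (0, x)) 2 volume ≤ ENNReal.ofReal G)
    (hF : ∫⁻ τ in Set.Ioc 0 T, eLpNorm (fun x => boxD u (τ, x)) 2 volume ≤ ENNReal.ofReal Φ)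
    (j : Fin 3) :
    (∫⁻ z in Set.Ioo 0 T ×ˢ (Set.univ : Set (Spc 3)),
      ENNReal.ofReal (((1 + |z.1 - ‖z.2‖|) ^ (-(1/2) - η)) ^ 2 * (TD j u z) ^ 2)) ^ (1/2 : ℝ) ≤
      ENNReal.ofReal (2 * √(1 + 2 * ghostMass η) * (G + Φ)) := by
  have hM := ghostMass_nonneg η
  have hpw : ∀ z : STn 3, ((1 + |z.1 - ‖z.2‖|) ^ (-(1/2) - η)) ^ 2 * (TD j u z) ^ 2 =
      ghostDensity η (z.1 - ‖z.2‖) * (TD j u z) ^ 2 := by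
    intro z
    rw [ghostDensity, ← Real.rpow_natCast, ← Real.rpow_mul (by positivity)]
    congr 2
    push_cast
    ring
  simp only [hpw]
  have h0 : Continuous (dtD u) := (contDiff_dirD hu _).continuous
  have h1 : ∀ j, Continuous (dxD j u) := fun j => (contDiff_dirD hu _).continuous
  apply le_ofReal_of_sq_le (by positivity)
  rw [← ENNReal.rpow_natCast, ← ENNReal.rpow_mul,
    show (1/2 : ℝ) * ((2 : ℕ) : ℝ) = 1 by norm_num, ENNReal.rpow_one]
  refine (lintegral_mono_set (Set.prod_mono_left Set.Ioo_subset_Ioc_self)).trans ?_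
  refine lintegral_ofReal_le_of_tendsto
    (f := fun (k : ℕ) z => ghostDensity η (z.1 - rhoE (1 / ((k : ℝ) + 1)) z.2) *
      cutB k (z.1 + rhoE (1 / ((k : ℝ) + 1)) z.2) *
      (dxD j u z + z.2 j / rhoE (1 / ((k : ℝ) + 1)) z.2 * dtD u z) ^ 2)
    (fun k => ?_) (fun z => ?_) (fun k => ?_)
  · have hε : 0 < 1 / ((k : ℝ) + 1) := by positivity
    have h2 := (contDiff_rhoE hε).continuous
    have h3 := continuous_ghostDensity η
    have h4 := (contDiff_cutB k).continuous
    have h5 : ∀ p : STn 3, rhoE (1 / ((k : ℝ) + 1)) p.2 ≠ 0 := fun p => (rhoE_pos hε p.2).ne'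
    apply Continuous.measurable
    fun_prop (disch := assumption)
  · have a1 := ((continuous_ghostDensity η).tendsto _).comp
      ((tendsto_rhoE z.2).const_sub z.1)
    have a2 := tendsto_cutB z.1 z.2
    have a3 := (((tendsto_div_rhoE z.2 j).mul_const (dtD u z)).const_add (dxD j u z)).pow 2
    have := (a1.mul a2).mul a3
    rw [mul_one] at this
    exact this
  · have hε : 0 < 1 / ((k : ℝ) + 1) := by positivity
    have hb := (localized_bound hη hε k hu hT hG hΦ hG0 hF).2
    have hi : IntegrableOn (goodD η (1 / ((k : ℝ) + 1)) k u)
        (Set.Ioc 0 T ×ˢ (Set.univ : Set (Spc 3))) :=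
      (inCone_goodD _ _ _ u).integrableOn (continuous_goodD η hε k hu) T
    calc _ ≤ ∫⁻ z in Set.Ioc 0 T ×ˢ (Set.univ : Set (Spc 3)), ENNReal.ofReal
          (goodD η (1 / ((k : ℝ) + 1)) k u z) := by
          apply lintegral_mono
          intro z
          apply ENNReal.ofReal_le_ofReal
          refine mul_le_mul_of_nonneg_left ?_
            (mul_nonneg (ghostDensity_nonneg _ _) (cutB_nonneg _ _))
          exact Finset.single_le_sum (f := fun i : Fin 3 =>
            (dxD i u z + z.2 i / rhoE (1 / ((k : ℝ) + 1)) z.2 * dtD u z) ^ 2)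
            (fun i _ => sq_nonneg _) (Finset.mem_univ j)
      _ = ENNReal.ofReal (∫ z in Set.Ioc 0 T ×ˢ (Set.univ : Set (Spc 3)),
            goodD η (1 / ((k : ℝ) + 1)) k u z) := by
          rw [ofReal_integral_eq_lintegral_ofReal hi
            (Filter.Eventually.of_forall (goodD_nonneg _ _ _ u))]
      _ ≤ _ := by
          apply ENNReal.ofReal_le_ofReal
          rw [mul_pow, mul_pow, Real.sq_sqrt (by positivity)]
          linarith

end GhostWeight

/-- The ghost-weight energy estimate of Alinhac and Lindblad–Rodnianski
(Lemma B.1). -/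
theorem ghost_weight_energy (η : ℝ) (hη : 0 < η) :
    ∃ C > (0 : ℝ), ∀ T : ℝ, 0 < T → ∀ F u : STn 3 → ℝ,
      ContDiff ℝ ∞ F → ContDiff ℝ ∞ u →
      (∀ t : ℝ, HasCompactSupport (fun x => u (t, x))) →
      (∀ z : STn 3, 0 ≤ z.1 → z.1 ≤ T → boxD u z = F z) →
      (⨆ (t : ℝ) (_ : t ∈ Set.Ioo 0 T), eLpNorm (fun x => gradN u (t, x)) 2 volume) +
          ∑ j : Fin 3,
            (∫⁻ z in Set.Ioo 0 T ×ˢ (Set.univ : Set (Spc 3)),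
              ENNReal.ofReal
                (((1 + |z.1 - ‖z.2‖|) ^ (-(1/2) - η)) ^ 2 * (TD j u z) ^ 2)) ^ (1/2 : ℝ) ≤
        ENNReal.ofReal C *
          (eLpNorm (fun x => gradN u (0, x)) 2 volume +
            ∫⁻ τ in Set.Ioc (0 : ℝ) T, eLpNorm (fun x => F (τ, x)) 2 volume) := by
  have hM := ghostMass_nonneg η
  refine ⟨8 * √(1 + 2 * ghostMass η), by positivity, ?_⟩
  intro T hT F u _ hu _ hbox
  have hFeq : ∫⁻ τ in Set.Ioc (0 : ℝ) T, eLpNorm (fun x => F (τ, x)) 2 volume =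
      ∫⁻ τ in Set.Ioc (0 : ℝ) T, eLpNorm (fun x => boxD u (τ, x)) 2 volume := by
    apply setLIntegral_congr_fun measurableSet_Ioc
    intro τ hτ
    simp only [hbox (τ, _) hτ.1.le hτ.2]
  rw [hFeq]
  set a := eLpNorm (fun x => gradN u (0, x)) 2 volume
  set b := ∫⁻ τ in Set.Ioc (0 : ℝ) T, eLpNorm (fun x => boxD u (τ, x)) 2 volume with hb
  by_cases htop : a + b = ⊤
  · rw [htop, ENNReal.mul_top]
    · exact le_top
    · simp only [ne_eq, ENNReal.ofReal_eq_zero, not_le]; positivity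
  obtain ⟨ha', hb'⟩ := ENNReal.add_ne_top.1 htop
  have ha := (ENNReal.ofReal_toReal ha').ge
  have hb2 := (ENNReal.ofReal_toReal hb').ge
  have hS : ⨆ (t : ℝ) (_ : t ∈ Set.Ioo 0 T), eLpNorm (fun x => gradN u (t, x)) 2 volume ≤
      ENNReal.ofReal (2 * √(1 + 2 * ghostMass η) * (a.toReal + b.toReal)) :=
    iSup₂_le fun t ht => energy_bound hη hu hT.le ENNReal.toReal_nonneg ENNReal.toReal_nonneg
      ha hb2 ⟨ht.1.le, ht.2.le⟩
  refine (add_le_add hS (Finset.sum_le_sum fun j _ => ghost_bound hη hu hT.le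
    ENNReal.toReal_nonneg ENNReal.toReal_nonneg ha hb2 j)).trans ?_
  have hr : a + b = ENNReal.ofReal (a.toReal + b.toReal) := by
    rw [ENNReal.ofReal_add ENNReal.toReal_nonneg ENNReal.toReal_nonneg,
      ENNReal.ofReal_toReal ha', ENNReal.ofReal_toReal hb']
  rw [hr, ← ENNReal.ofReal_mul (by positivity)]
  have h0 : 0 ≤ 2 * √(1 + 2 * ghostMass η) * (a.toReal + b.toReal) := by positivity
  rw [Fin.sum_univ_three, ← ENNReal.ofReal_add h0 h0, ← ENNReal.ofReal_add (by linarith) h0,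
    ← ENNReal.ofReal_add h0 (by linarith)]
  apply ENNReal.ofReal_le_ofReal
  linarith
end
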